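/- arXiv:2003.14302 — 2 statements merged into one kernel-verified Lean document; each statement's English description precedes it below -/
import Mathlib

section
/- Let V be a real vector space, K ⊆ V a convex set, and E ⊆ K a subset. The following are equivalent: (1) E is an extreme subset of K; (2) E contains the face F_K(x) generated by each point x ∈ E; (3) E is a union of faces of K each having nonempty relative algebraic interior; (4) E is a union of faces of K. -/
variable {V : Type*} [AddCommGroup V] [Module ℝ V]

/-- `E` is an extreme subset of `K`: whenever a point of `E` is written as
`(1-l)•y + l•z` with `y, z ∈ K` and `l ∈ (0,1)`, both `y` and `z` lie in `E`. -/
def IsExtremeSubset (K E : Set V) : Prop :=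
  E ⊆ K ∧ ∀ x ∈ E, ∀ y ∈ K, ∀ z ∈ K, ∀ l : ℝ, l ∈ Set.Ioo (0:ℝ) 1 →
    x = (1 - l) • y + l • z → y ∈ E ∧ z ∈ E

/-- `F` is a face of `K`: a convex extreme subset of `K`. -/
def IsFaceOf (K F : Set V) : Prop := Convex ℝ F ∧ IsExtremeSubset K F

/-- The face of `K` generated by `x`: the smallest face of `K` containing `x`
(the intersection of all faces of `K` containing `x`). -/
def genFace (K : Set V) (x : V) : Set V := ⋂₀ {F | IsFaceOf K F ∧ x ∈ F}

/-- The relative algebraic interior of `C`: all `x ∈ C` such that for every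
`y` in the affine hull of `C` there is `ε > 0` with `x ± ε(y - x) ∈ C`. -/
def riSet (C : Set V) : Set V :=
  {x | x ∈ C ∧ ∀ y ∈ affineSpan ℝ C, ∃ ε : ℝ, 0 < ε ∧
    x + ε • (y - x) ∈ C ∧ x - ε • (y - x) ∈ C}

/-- Explicit description of the generated face. -/
def explFace (K : Set V) (x : V) : Set V :=
  {y | y ∈ K ∧ ∃ ε : ℝ, 0 < ε ∧ x - ε • (y - x) ∈ K}

theorem shrink_mem {K : Set V} (hK : Convex ℝ K) {x v : V} (hx : x ∈ K) {a b : ℝ}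
    (ha : 0 < a) (hb : 0 < b) (hba : b ≤ a) (h : x + a • v ∈ K) : x + b • v ∈ K := by
  have h1 : 0 ≤ b / a := by positivity
  have h2 : b / a ≤ 1 := (div_le_one ha).2 hba
  have := hK hx h (sub_nonneg.2 h2) h1 (by ring)
  convert this using 1
  match_scalars <;> field_simp <;> ring

theorem explFace_subset {K E : Set V} (hE : IsExtremeSubset K E) {x : V} (hx : x ∈ E) :
    explFace K x ⊆ E := by
  rintro y ⟨hy, e, he, hu⟩
  refine (hE.2 x hx y hy _ hu (1 / (1 + e)) ⟨by positivity, ?_⟩ ?_).1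
  · rw [div_lt_one (by positivity)]; linarith
  · match_scalars <;> field_simp <;> ring

theorem mem_explFace {K : Set V} {x : V} (hx : x ∈ K) : x ∈ explFace K x :=
  ⟨hx, 1, one_pos, by simpa using hx⟩

theorem explFace_left {K : Set V} (hK : Convex ℝ K) {x w y z : V} {l : ℝ}
    (hw : w ∈ explFace K x) (hy : y ∈ K) (hz : z ∈ K) (hl : l ∈ Set.Ioo (0:ℝ) 1)
    (h : w = (1 - l) • y + l • z) : y ∈ explFace K x := by
  obtain ⟨-, e, he, hu⟩ := hw
  obtain ⟨h0, h1⟩ := hl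
  have h3 : 0 < 1 - l := sub_pos.2 h1
  have h2 : 0 < 1 + e * l := by positivity
  refine ⟨hy, e * (1 - l) / (1 + e * l), by positivity, ?_⟩
  have := hK hu hz (a := 1 / (1 + e * l)) (b := e * l / (1 + e * l)) (by positivity)
    (by positivity) (by field_simp)
  convert this using 1
  subst h
  match_scalars <;> field_simp <;> ring

theorem explFace_face {K : Set V} (hK : Convex ℝ K) {x : V} (hx : x ∈ K) :
    IsFaceOf K (explFace K x) := by
  refine ⟨?_, fun y hy => hy.1, ?_⟩
  · rintro y ⟨hy, e, he, hu⟩ z ⟨hz, d, hd, hv⟩ a b ha hb hab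
    refine ⟨hK hy hz ha hb hab, min e d, lt_min he hd, ?_⟩
    have hm := lt_min he hd
    have h1 : x + (min e d) • (-(y - x)) ∈ K :=
      shrink_mem hK hx he hm (min_le_left _ _) (by simpa [sub_eq_add_neg] using hu)
    have h2 : x + (min e d) • (-(z - x)) ∈ K :=
      shrink_mem hK hx hd hm (min_le_right _ _) (by simpa [sub_eq_add_neg] using hv)
    have := hK h1 h2 ha hb hab
    convert this using 1
    obtain rfl : b = 1 - a := by linarith
    module
  · intro w hw y hy z hz l hl h
    refine ⟨explFace_left hK hw hy hz hl h, ?_⟩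
    refine explFace_left hK hw hz hy (l := 1 - l) ⟨by linarith [hl.2], by linarith [hl.1]⟩ ?_
    rw [h]; module

theorem genFace_eq {K : Set V} (hK : Convex ℝ K) {x : V} (hx : x ∈ K) :
    genFace K x = explFace K x := by
  apply Set.Subset.antisymm
  · exact Set.sInter_subset_of_mem ⟨explFace_face hK hx, mem_explFace hx⟩
  · exact Set.subset_sInter fun F hF => explFace_subset hF.1.2 hF.2

/-- Directions in which `K` extends both ways from `x`. -/
def dirSub (K : Set V) (hK : Convex ℝ K) (x : V) (hx : x ∈ K) : Submodule ℝ V where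
  carrier := {v | ∃ ε : ℝ, 0 < ε ∧ x + ε • v ∈ K ∧ x - ε • v ∈ K}
  zero_mem' := ⟨1, one_pos, by simpa using hx, by simpa using hx⟩
  add_mem' := by
    rintro v w ⟨e, he, h1, h2⟩ ⟨d, hd, h3, h4⟩
    have hm := lt_min he hd
    have k1 := shrink_mem hK hx he hm (min_le_left _ _) h1
    have k2 := shrink_mem hK hx (v := -v) he hm (min_le_left _ _)
      (by simpa [sub_eq_add_neg] using h2)
    have k3 := shrink_mem hK hx hd hm (min_le_right _ _) h3
    have k4 := shrink_mem hK hx (v := -w) hd hm (min_le_right _ _)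
      (by simpa [sub_eq_add_neg] using h4)
    refine ⟨min e d / 2, by positivity, ?_, ?_⟩
    · have := hK k1 k3 (a := 1 / 2) (b := 1 / 2) (by norm_num) (by norm_num) (by norm_num)
      convert this using 1
      module
    · have := hK k2 k4 (a := 1 / 2) (b := 1 / 2) (by norm_num) (by norm_num) (by norm_num)
      convert this using 1
      module
  smul_mem' := by
    rintro c v ⟨e, he, h1, h2⟩
    rcases lt_trichotomy c 0 with hc | rfl | hc
    · refine ⟨e / (-c), div_pos he (neg_pos.2 hc), ?_, ?_⟩
      · convert h2 using 1
        have := hc.ne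
        match_scalars <;> field_simp
      · convert h1 using 1
        have := hc.ne
        match_scalars <;> field_simp
    · exact ⟨1, one_pos, by simpa using hx, by simpa using hx⟩
    · refine ⟨e / c, div_pos he hc, ?_, ?_⟩
      · convert h1 using 1
        match_scalars <;> field_simp
      · convert h2 using 1
        match_scalars <;> field_simp

theorem mem_ri_explFace {K : Set V} (hK : Convex ℝ K) {x : V} (hx : x ∈ K) :
    x ∈ riSet (explFace K x) := by
  refine ⟨mem_explFace hx, fun y hy => ?_⟩
  have hle : affineSpan ℝ (explFace K x) ≤ AffineSubspace.mk' x (dirSub K hK x hx) := by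
    rw [affineSpan_le]
    rintro z ⟨hz, e, he, hu⟩
    rw [SetLike.mem_coe, AffineSubspace.mem_mk', vsub_eq_sub]
    have hm : 0 < min e 1 := lt_min he one_pos
    refine ⟨min e 1, hm, ?_, ?_⟩
    · exact shrink_mem hK hx one_pos hm (min_le_right _ _) (by simpa using hz)
    · have := shrink_mem hK hx (v := -(z - x)) he hm (min_le_left _ _)
        (by simpa [sub_eq_add_neg] using hu)
      convert this using 1
      module
  have h := hle hy
  rw [AffineSubspace.mem_mk', vsub_eq_sub] at h
  obtain ⟨e, he, h1, h2⟩ := h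
  refine ⟨e, he, ⟨h1, 1, one_pos, ?_⟩, ⟨h2, 1, one_pos, ?_⟩⟩
  · convert h2 using 1; module
  · convert h1 using 1; module

theorem stmt5 (K E : Set V) (hK : Convex ℝ K) (hE : E ⊆ K) :
    (IsExtremeSubset K E ↔ ∀ x ∈ E, genFace K x ⊆ E) ∧
    ((∀ x ∈ E, genFace K x ⊆ E) ↔
      ∃ 𝓕 : Set (Set V), (∀ F ∈ 𝓕, IsFaceOf K F ∧ (riSet F).Nonempty) ∧ E = ⋃₀ 𝓕) ∧
    ((∃ 𝓕 : Set (Set V), (∀ F ∈ 𝓕, IsFaceOf K F ∧ (riSet F).Nonempty) ∧ E = ⋃₀ 𝓕) ↔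
      ∃ 𝓕 : Set (Set V), (∀ F ∈ 𝓕, IsFaceOf K F) ∧ E = ⋃₀ 𝓕) := by
  have h12 : IsExtremeSubset K E → ∀ x ∈ E, genFace K x ⊆ E := fun h x hx => by
    rw [genFace_eq hK (hE hx)]; exact explFace_subset h hx
  have h23 : (∀ x ∈ E, genFace K x ⊆ E) →
      ∃ 𝓕 : Set (Set V), (∀ F ∈ 𝓕, IsFaceOf K F ∧ (riSet F).Nonempty) ∧ E = ⋃₀ 𝓕 := by
    intro h
    refine ⟨(fun x => explFace K x) '' E, ?_, ?_⟩
    · rintro _ ⟨x, hx, rfl⟩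
      exact ⟨explFace_face hK (hE hx), x, mem_ri_explFace hK (hE hx)⟩
    · apply Set.Subset.antisymm
      · exact fun x hx => ⟨_, ⟨x, hx, rfl⟩, mem_explFace (hE hx)⟩
      · rintro y ⟨_, ⟨x, hx, rfl⟩, hy⟩
        exact h x hx (by rw [genFace_eq hK (hE hx)]; exact hy)
  have h34 : (∃ 𝓕 : Set (Set V), (∀ F ∈ 𝓕, IsFaceOf K F ∧ (riSet F).Nonempty) ∧ E = ⋃₀ 𝓕) →
      ∃ 𝓕 : Set (Set V), (∀ F ∈ 𝓕, IsFaceOf K F) ∧ E = ⋃₀ 𝓕 := by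
    rintro ⟨A, hA, h⟩
    exact ⟨A, fun F hF => (hA F hF).1, h⟩
  have h41 : (∃ 𝓕 : Set (Set V), (∀ F ∈ 𝓕, IsFaceOf K F) ∧ E = ⋃₀ 𝓕) →
      IsExtremeSubset K E := by
    rintro ⟨A, hA, rfl⟩
    refine ⟨hE, ?_⟩
    rintro x ⟨F, hF, hx⟩ y hy z hz l hl h
    obtain ⟨h1, h2⟩ := (hA F hF).2.2 x hx y hy z hz l hl h
    exact ⟨⟨F, hF, h1⟩, ⟨F, hF, h2⟩⟩
  exact ⟨⟨h12, fun h => h41 (h34 (h23 h))⟩, ⟨h23, fun h => h12 (h41 (h34 h))⟩,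
    ⟨h34, fun h => h23 (h12 (h41 h))⟩⟩
end

section
/- Let V be a real vector space, K ⊆ V a convex set, f : K → ℝ ∪ {+∞} a generalized affine map, and α ∈ ℝ. Let C be either the sublevel set K_f^≤ = {x ∈ K : f(x) ≤ α} or the level set K_f^= = {x ∈ K : f(x) = α}, and let x ∈ C. If the face F_C(x) of C generated by x has finite dimension m ∈ ℕ, then the face F_K(x) of K generated by x has dimension m or m + 1. -/
variable {V : Type*} [AddCommGroup V] [Module ℝ V]

/-- A generalized affine map on `K` with values in `ℝ ∪ {+∞}` (modelled by
`EReal` values that are never `⊥` on `K`), affine with the extended arithmetic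
`0·(+∞) = 0`, `λ·(+∞) = +∞` for `λ > 0`, `α + (+∞) = +∞`. -/
def IsGenAffine (K : Set V) (f : V → EReal) : Prop :=
  (∀ x ∈ K, f x ≠ ⊥) ∧
  ∀ x ∈ K, ∀ y ∈ K, ∀ l : ℝ, l ∈ Set.Icc (0:ℝ) 1 →
    f ((1 - l) • x + l • y) = ((1 - l : ℝ) : EReal) * f x + ((l : ℝ) : EReal) * f y

theorem aux_shrink {K : Set V} (hK : Convex ℝ K) {x v : V} (hx : x ∈ K) {e d : ℝ}
    (he : 0 < e) (hd : 0 ≤ d) (hde : d ≤ e) (h : x + e • v ∈ K) : x + d • v ∈ K := by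
  have h1 := hK hx h (a := 1 - d / e) (b := d / e)
    (by rw [sub_nonneg, div_le_one he]; exact hde) (by positivity) (by ring)
  have h2 : (1 - d / e) • x + (d / e) • (x + e • v) = x + d • v := by
    match_scalars <;> field_simp <;> ring
  rwa [h2] at h1

theorem aux_shrink' {K : Set V} (hK : Convex ℝ K) {x v : V} (hx : x ∈ K) {e d : ℝ}
    (he : 0 < e) (hd : 0 ≤ d) (hde : d ≤ e) (h : x - e • v ∈ K) : x - d • v ∈ K := by
  have := aux_shrink hK (v := -v) hx he hd hde (by simpa [sub_eq_add_neg] using h)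
  simpa [sub_eq_add_neg] using this

def SS (K : Set V) (hK : Convex ℝ K) (x : V) (hx : x ∈ K) : Submodule ℝ V where
  carrier := {v | ∃ e : ℝ, 0 < e ∧ x + e • v ∈ K ∧ x - e • v ∈ K}
  zero_mem' := ⟨1, one_pos, by simpa using hx, by simpa using hx⟩
  add_mem' := by
    rintro v w ⟨e, he, h1, h2⟩ ⟨d, hd, h3, h4⟩
    have hm : 0 < min e d := lt_min he hd
    refine ⟨min e d / 2, by positivity, ?_, ?_⟩
    · have := hK (aux_shrink hK hx he hm.le (min_le_left e d) h1)
        (aux_shrink hK hx hd hm.le (min_le_right e d) h3) (a := 1/2) (b := 1/2)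
        (by norm_num) (by norm_num) (by norm_num)
      convert this using 1
      module
    · have := hK (aux_shrink' hK hx he hm.le (min_le_left e d) h2)
        (aux_shrink' hK hx hd hm.le (min_le_right e d) h4) (a := 1/2) (b := 1/2)
        (by norm_num) (by norm_num) (by norm_num)
      convert this using 1
      module
  smul_mem' := by
    rintro c v ⟨e, he, h1, h2⟩
    rcases lt_trichotomy c 0 with hc | hc | hc
    · refine ⟨e / (-c), div_pos he (by linarith), ?_, ?_⟩
      · convert h2 using 1
        have := hc.ne
        match_scalars <;> field_simp
      · convert h1 using 1
        have := hc.ne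
        match_scalars <;> field_simp
    · subst hc
      exact ⟨1, one_pos, by simpa using hx, by simpa using hx⟩
    · refine ⟨e / c, div_pos he hc, ?_, ?_⟩
      · convert h1 using 1
        have := hc.ne
        match_scalars <;> field_simp
      · convert h2 using 1
        have := hc.ne
        match_scalars <;> field_simp

theorem aux_ext {K : Set V} (hK : Convex ℝ K) {x : V} (hx : x ∈ K) {a b : V}
    (ha : a ∈ K) (hb : b ∈ K) {l : ℝ} (hl0 : 0 < l) (hl1 : l < 1)
    (h : (1 - l) • a + l • b - x ∈ SS K hK x hx) : a - x ∈ SS K hK x hx := by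
  obtain ⟨e, he, _, h2⟩ := h
  have hm : 0 < min e 1 := lt_min he one_pos
  have hp := aux_shrink' hK hx he hm.le (min_le_left e 1) h2
  have hs1 : min e 1 ≤ 1 := min_le_right _ _
  generalize min e 1 = s at *
  have hl1' : 0 < 1 - l := by linarith
  have hq : 0 < 1 + s * l := by positivity
  have hd : 0 < s * (1 - l) / (1 + s * l) := by positivity
  refine ⟨s * (1 - l) / (1 + s * l), hd, ?_, ?_⟩
  · refine aux_shrink hK hx one_pos hd.le ?_ (by simpa using ha)
    rw [div_le_one hq]
    nlinarith [mul_pos hm hl0]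
  · have := hK hp hb (a := 1 / (1 + s * l)) (b := s * l / (1 + s * l))
      (by positivity) (by positivity) (by field_simp)
    convert this using 1
    match_scalars <;> field_simp <;> ring

theorem aux_vs {K : Set V} (hK : Convex ℝ K) {x : V} (hx : x ∈ K) :
    vectorSpan ℝ (genFace K x) = SS K hK x hx := by
  have hxF : x ∈ genFace K x := fun F hF => hF.2
  apply le_antisymm
  · rw [vectorSpan_eq_span_vsub_set_right ℝ hxF, Submodule.span_le]
    rintro _ ⟨y, hy, rfl⟩
    have hface : IsFaceOf K {y | y ∈ K ∧ y - x ∈ SS K hK x hx} := by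
      refine ⟨?_, fun y hy => hy.1, ?_⟩
      · rintro y ⟨hy, hy'⟩ z ⟨hz, hz'⟩ a b ha hb hab
        refine ⟨hK hy hz ha hb hab, ?_⟩
        have := (SS K hK x hx).add_mem ((SS K hK x hx).smul_mem a hy')
          ((SS K hK x hx).smul_mem b hz')
        convert this using 1
        obtain rfl : b = 1 - a := by linarith
        module
      · rintro y ⟨_, hy'⟩ a ha b hb l ⟨hl0, hl1⟩ rfl
        refine ⟨⟨ha, aux_ext hK hx ha hb hl0 hl1 hy'⟩,
          ⟨hb, aux_ext hK hx hb ha (l := 1 - l) (by linarith) (by linarith) ?_⟩⟩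
        convert hy' using 1
        module
    exact (hy _ ⟨hface, hx, by simp⟩).2
  · rintro v ⟨e, he, h1, h2⟩
    have hmem : x + e • v ∈ genFace K x := by
      rintro F ⟨hF, hxF'⟩
      exact (hF.2.2 x hxF' _ h1 _ h2 (1/2) ⟨by norm_num, by norm_num⟩ (by module)).1
    have := vsub_mem_vectorSpan ℝ hmem hxF
    have h3 := (vectorSpan ℝ (genFace K x)).smul_mem e⁻¹ this
    convert h3 using 1
    simp [smul_smul, he.ne']

theorem aux_real {K : Set V} {f : V → EReal} (hf : IsGenAffine K f) {y z : V}
    (hy : y ∈ K) (hz : z ∈ K) {r s l : ℝ} (hl0 : 0 ≤ l) (hl1 : l ≤ 1)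
    (hr : f y = r) (hs : f z = s) :
    f ((1 - l) • y + l • z) = (((1 - l) * r + l * s : ℝ) : EReal) := by
  rw [hf.2 y hy z hz l ⟨hl0, hl1⟩, hr, hs]
  push_cast
  rfl

/-- A directional derivative relation. -/
def RR (K : Set V) (f : V → EReal) (x : V) (g : ℝ) (v : V) (c : ℝ) : Prop :=
  ∃ e : ℝ, 0 < e ∧ x + e • v ∈ K ∧ x - e • v ∈ K ∧
    f (x + e • v) = ((g + e * c : ℝ) : EReal) ∧ f (x - e • v) = ((g - e * c : ℝ) : EReal)

theorem aux_fshrink {K : Set V} {f : V → EReal} (hf : IsGenAffine K f)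
    {x v : V} (hx : x ∈ K) {g c : ℝ} (hg : f x = g) {e d : ℝ}
    (he : 0 < e) (hd : 0 ≤ d) (hde : d ≤ e) (h : x + e • v ∈ K)
    (h' : f (x + e • v) = ((g + e * c : ℝ) : EReal)) :
    f (x + d • v) = ((g + d * c : ℝ) : EReal) := by
  have h1 := aux_real hf hx h (l := d / e) (by positivity)
    (by rw [div_le_one he]; exact hde) hg h'
  have h2 : (1 - d / e) • x + (d / e) • (x + e • v) = x + d • v := by
    match_scalars <;> field_simp <;> ring
  have h3 : (1 - d / e) * g + d / e * (g + e * c) = g + d * c := by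
    field_simp
    ring
  rwa [h2, h3] at h1

theorem RR.shrink {K : Set V} (hK : Convex ℝ K) {f : V → EReal} (hf : IsGenAffine K f)
    {x v : V} (hx : x ∈ K) {g c : ℝ} (hg : f x = g) (h : RR K f x g v c) :
    ∃ e : ℝ, 0 < e ∧ ∀ d : ℝ, 0 < d → d ≤ e → x + d • v ∈ K ∧ x - d • v ∈ K ∧
    f (x + d • v) = ((g + d * c : ℝ) : EReal) ∧ f (x - d • v) = ((g - d * c : ℝ) : EReal) := by
  obtain ⟨e, he, h1, h2, h3, h4⟩ := h
  refine ⟨e, he, fun d hd hde => ⟨aux_shrink hK hx he hd.le hde h1,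
    aux_shrink' hK hx he hd.le hde h2, aux_fshrink hf hx hg he hd.le hde h1 h3, ?_⟩⟩
  have := aux_fshrink hf hx (v := -v) (c := -c) hg he hd.le hde
    (by simpa [sub_eq_add_neg] using h2) (by rw [smul_neg, ← sub_eq_add_neg, h4]; congr 1; ring)
  rw [smul_neg, ← sub_eq_add_neg] at this
  rw [this]
  congr 1
  ring

theorem RR.add {K : Set V} (hK : Convex ℝ K) {f : V → EReal} (hf : IsGenAffine K f)
    {x v w : V} (hx : x ∈ K) {g c c' : ℝ} (hg : f x = g) (h : RR K f x g v c)
    (h' : RR K f x g w c') : RR K f x g (v + w) (c + c') := by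
  obtain ⟨e, he, h1⟩ := h.shrink hK hf hx hg
  obtain ⟨d, hd, h2⟩ := h'.shrink hK hf hx hg
  have hm : 0 < min e d := lt_min he hd
  obtain ⟨a1, a2, a3, a4⟩ := h1 _ hm (min_le_left e d)
  obtain ⟨b1, b2, b3, b4⟩ := h2 _ hm (min_le_right e d)
  generalize min e d = s at *
  have e1 : x + (s / 2) • (v + w) = (1 - 1/2 : ℝ) • (x + s • v) + (1/2 : ℝ) • (x + s • w) := by
    module
  have e2 : x - (s / 2) • (v + w) = (1 - 1/2 : ℝ) • (x - s • v) + (1/2 : ℝ) • (x - s • w) := by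
    module
  refine ⟨s / 2, by positivity, ?_, ?_, ?_, ?_⟩
  · rw [e1]; exact hK a1 b1 (by norm_num) (by norm_num) (by norm_num)
  · rw [e2]; exact hK a2 b2 (by norm_num) (by norm_num) (by norm_num)
  · rw [e1, aux_real hf a1 b1 (by norm_num) (by norm_num) a3 b3]; congr 1; ring
  · rw [e2, aux_real hf a2 b2 (by norm_num) (by norm_num) a4 b4]; congr 1; ring

theorem RR.smul {K : Set V} {f : V → EReal}
    {x v : V} (hx : x ∈ K) {g c : ℝ} (hg : f x = g) (h : RR K f x g v c)
    (t : ℝ) : RR K f x g (t • v) (t * c) := by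
  obtain ⟨e, he, h1, h2, h3, h4⟩ := h
  rcases lt_trichotomy t 0 with hc | hc | hc
  · have e0 : e / (-t) * t = -e := by
      have := hc.ne
      field_simp
    refine ⟨e / (-t), div_pos he (by linarith), ?_⟩
    rw [smul_smul, ← mul_assoc, e0]
    simp only [neg_smul, sub_neg_eq_add, ← sub_eq_add_neg, neg_mul]
    exact ⟨h2, h1, h4, h3⟩
  · subst hc
    exact ⟨1, one_pos, by simpa using hx, by simpa using hx, by simpa using hg, by simpa using hg⟩
  · have e0 : e / t * t = e := by field_simp
    refine ⟨e / t, div_pos he hc, ?_⟩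
    rw [smul_smul, ← mul_assoc, e0]
    exact ⟨h1, h2, h3, h4⟩

theorem aux_fin {K : Set V} {f : V → EReal} (hf : IsGenAffine K f) {y z : V}
    (hy : y ∈ K) (hz : z ∈ K) {g : ℝ} (h : f ((1 - 1/2 : ℝ) • y + (1/2 : ℝ) • z) = g) :
    ∃ r s : ℝ, f y = r ∧ f z = s ∧ r + s = 2 * g := by
  have hy0 := hf.1 y hy
  have hz0 := hf.1 z hz
  have h1 := hf.2 y hy z hz (1/2) ⟨by norm_num, by norm_num⟩
  rw [h] at h1
  generalize f y = p at *
  generalize f z = q at *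
  have h12 : (0:ℝ) < 1 - 1/2 := by norm_num
  have h13 : (0:ℝ) < 1/2 := by norm_num
  induction p with
  | bot => exact absurd rfl hy0
  | top =>
    exfalso
    rw [EReal.coe_mul_top_of_pos h12] at h1
    induction q with
    | bot => exact absurd rfl hz0
    | top => rw [EReal.coe_mul_top_of_pos h13] at h1; exact absurd h1 (by simp)
    | coe q => rw [← EReal.coe_mul, EReal.top_add_coe] at h1; exact absurd h1 (by simp)
  | coe p =>
    induction q with
    | bot => exact absurd rfl hz0
    | top =>
      rw [EReal.coe_mul_top_of_pos h13, ← EReal.coe_mul, EReal.coe_add_top] at h1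
      exact absurd h1 (by simp)
    | coe q =>
      refine ⟨p, q, rfl, rfl, ?_⟩
      have : g = (1 - 1/2) * p + 1/2 * q := by exact_mod_cast h1
      linarith

theorem aux_RR {K : Set V} (hK : Convex ℝ K) {f : V → EReal} (hf : IsGenAffine K f)
    {x v : V} (hx : x ∈ K) {g : ℝ} (hg : f x = g) (h : v ∈ SS K hK x hx) :
    ∃ c, RR K f x g v c := by
  obtain ⟨e, he, h1, h2⟩ := h
  have e1 : (1 - 1/2 : ℝ) • (x + e • v) + (1/2 : ℝ) • (x - e • v) = x := by module
  obtain ⟨r, s, hr, hs, hrs⟩ := aux_fin hf h1 h2 (g := g) (by rw [e1, hg])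
  refine ⟨(r - g) / e, e, he, h1, h2, ?_, ?_⟩
  · rw [hr]; congr 1; field_simp; ring
  · rw [hs]; congr 1; field_simp; linarith

theorem aux_lt {K : Set V} {f : V → EReal} (hf : IsGenAffine K f) {y : V} (hy : y ∈ K)
    {α : ℝ} (h : f y ≤ α) : ∃ r : ℝ, f y = r ∧ r ≤ α := by
  have h0 := hf.1 y hy
  generalize f y = p at *
  induction p with
  | bot => exact absurd rfl h0
  | top => simp at h
  | coe p => exact ⟨p, rfl, by exact_mod_cast h⟩

theorem stmt11 (K : Set V) (hK : Convex ℝ K) (f : V → EReal) (hf : IsGenAffine K f)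
    (α : ℝ) (C : Set V)
    (hC : C = {x ∈ K | f x ≤ (α : EReal)} ∨ C = {x ∈ K | f x = (α : EReal)})
    (x : V) (hx : x ∈ C) (m : ℕ)
    (hm : Module.rank ℝ ↥(vectorSpan ℝ (genFace C x)) = (m : Cardinal)) :
    Module.rank ℝ ↥(vectorSpan ℝ (genFace K x)) = (m : Cardinal) ∨
    Module.rank ℝ ↥(vectorSpan ℝ (genFace K x)) = ((m + 1 : ℕ) : Cardinal) := by
  have hCK : C ⊆ K := by
    rcases hC with rfl | rfl <;> exact fun y hy => hy.1
  have hCle : ∀ y ∈ C, f y ≤ α := by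
    rcases hC with rfl | rfl
    · exact fun y hy => hy.2
    · exact fun y hy => hy.2.le
  have hCconv : Convex ℝ C := by
    intro y hy z hz a b ha hb hab
    obtain ⟨r, hr, hr'⟩ := aux_lt hf (hCK hy) (hCle y hy)
    obtain ⟨s, hs, hs'⟩ := aux_lt hf (hCK hz) (hCle z hz)
    obtain rfl : a = 1 - b := by linarith
    have h1 := aux_real hf (hCK hy) (hCK hz) hb (by linarith) hr hs
    have h2 := hK (hCK hy) (hCK hz) ha hb hab
    rcases hC with rfl | rfl
    · refine ⟨h2, ?_⟩
      rw [h1]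
      have : (1 - b) * r + b * s ≤ α := by nlinarith
      exact_mod_cast this
    · refine ⟨h2, ?_⟩
      have h3 : r = α := by have := hy.2; rw [hr] at this; exact_mod_cast this
      have h4 : s = α := by have := hz.2; rw [hs] at this; exact_mod_cast this
      rw [h1, h3, h4]
      congr 1
      ring
  have hxK := hCK hx
  obtain ⟨g, hg, hgα⟩ := aux_lt hf hxK (hCle x hx)
  rw [aux_vs hK hxK]
  rw [aux_vs hCconv hx] at hm
  have hle : SS C hCconv x hx ≤ SS K hK x hxK := by
    rintro v ⟨e, he, h1, h2⟩
    exact ⟨e, he, hCK h1, hCK h2⟩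
  -- zero derivative gives membership
  have hzero : ∀ v, RR K f x g v 0 → v ∈ SS C hCconv x hx := by
    rintro v ⟨e, he, h1, h2, h3, h4⟩
    rw [mul_zero, add_zero, ← hg] at h3
    rw [mul_zero, sub_zero, ← hg] at h4
    refine ⟨e, he, ?_⟩
    rcases hC with rfl | rfl
    · exact ⟨⟨h1, h3.trans_le hx.2⟩, ⟨h2, h4.trans_le hx.2⟩⟩
    · exact ⟨⟨h1, h3.trans hx.2⟩, ⟨h2, h4.trans hx.2⟩⟩
  obtain ⟨w, hw⟩ : ∃ w, SS K hK x hxK ≤ SS C hCconv x hx ⊔ Submodule.span ℝ {w} := by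
    by_cases hcase : SS K hK x hxK ≤ SS C hCconv x hx
    · exact ⟨0, hcase.trans le_sup_left⟩
    · obtain ⟨w, hwK, hwC⟩ := SetLike.not_le_iff_exists.1 hcase
      obtain ⟨a, ha⟩ := aux_RR hK hf hxK hg hwK
      have ha0 : a ≠ 0 := by
        rintro rfl
        exact hwC (hzero w ha)
      refine ⟨w, fun u hu => ?_⟩
      obtain ⟨b, hb⟩ := aux_RR hK hf hxK hg hu
      have h1 := hb.add hK hf hxK hg (ha.smul hxK hg (-(b / a)))
      have h2 : b + -(b / a) * a = 0 := by field_simp; ring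
      rw [h2] at h1
      refine Submodule.mem_sup.2 ⟨_, hzero _ h1, (b / a) • w,
        Submodule.smul_mem _ _ (Submodule.mem_span_singleton_self w), by module⟩
  have hfin : Module.rank ℝ ↥(SS K hK x hxK) ≤ ((m + 1 : ℕ) : Cardinal) := by
    refine (Submodule.rank_mono hw).trans ((Submodule.rank_add_le_rank_add_rank _ _).trans ?_)
    rw [hm]
    push_cast
    gcongr
    exact (rank_span_le _).trans (by simp)
  have hge := Submodule.rank_mono hle
  rw [hm] at hge
  obtain ⟨n, hn⟩ := Cardinal.lt_aleph0.1 (hfin.trans_lt (Cardinal.natCast_lt_aleph0))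
  rw [hn] at hfin hge ⊢
  norm_cast at hfin hge ⊢
  omega
end
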